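/- Let (U_i)_{i∈ℕ} be an α-mixing sequence of identically U[0,1]-distributed random variables with mixing coefficients (α(n)), let Ĝ_n(t) := (1/n)·#{1 ≤ i ≤ n : U_i ≤ t}, let r ∈ [0, 1/2), C > 0 and ϑ > 2r, and suppose α(n) ≤ C·n^{−ϑ} for all n ∈ ℕ. Then n^r · sup_{t∈[0,1]} |Ĝ_n(t) − t| → 0 ℙ-almost surely as n → ∞. -/

import Mathlib

open MeasureTheory Filter Set

/-- The empirical distribution function of `U 0, …, U (n-1)` evaluated at `t`. -/
noncomputable def empDF {Ω : Type*} (U : ℕ → Ω → ℝ) (n : ℕ) (ω : Ω) (t : ℝ) : ℝ :=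
  (((Finset.range n).filter fun i => U i ω ≤ t).card : ℝ) / n

/-- α-mixing coefficients of a sequence of real random variables. -/
noncomputable def alphaCoef {Ω : Type*} [MeasurableSpace Ω] (P : Measure Ω)
    (U : ℕ → Ω → ℝ) (n : ℕ) : ℝ :=
  sSup { c : ℝ | ∃ (k : ℕ) (A B : Set Ω),
    MeasurableSet[⨆ i ∈ {i : ℕ | i ≤ k}, MeasurableSpace.comap (U i) Real.measurableSpace] A ∧
    MeasurableSet[⨆ i ∈ {i : ℕ | k + n ≤ i}, MeasurableSpace.comap (U i) Real.measurableSpace] B ∧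
    c = |(P (A ∩ B)).toReal - (P A).toReal * (P B).toReal| }

/-!
Put `N = 2 ^ K` and consider `n (Ĝ_n(t) - t)` as a function of the two integers `n ≤ N` and
`j = N t ≤ N`. By dyadic chaining in both variables (Rademacher–Menshov), its maximum squared is
at most `(K + 1) ^ 2` times the sum of its squared increments over all dyadic rectangles, its
energy. The increment over a rectangle is a centred count of the points `U i` that fall in a cell,
for `i` in a block of time. For disjoint cells `I_p`, the covariances of `1_{U_i ∈ I_p}` and
`1_{U_j ∈ I_p}` sum over `p` to at most `4 α(|i - j|)`, whatever the number of cells (Rio). Hence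
the energy has mean `O(K ^ 2 N ∑_{d < N} α(d))`, which is `O(K ^ 3 N ^ (2 - θ))` with
`θ = min ϑ 1 > 2r`. Multiplied by `(K + 1) ^ 2 N ^ (2r - 2)` this is summable in `K`, so that the
maximum is almost surely `o(N ^ (1 - r))`. Interpolation between grid points costs at most `1`, and
every `n` lies within a factor `2` of some `2 ^ K`.
-/

open ProbabilityTheory
open scoped Topology ENNReal

section DyadicChaining

variable {E : Type*}

/-- The block `⟨m, q⟩` stands for the integer interval `[2 ^ m * q, 2 ^ m * (q + 1)]`; these are the
dyadic blocks contained in `[0, 2 ^ K]`. -/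
def dyadicBlocks (K : ℕ) : Finset ((_ : ℕ) × ℕ) :=
  (Finset.range (K + 1)).sigma fun m => Finset.range (2 ^ (K - m))

/-- The increment of a sequence over a dyadic block. Over a function of two integers, it is the
increment in the first one, so that iterating it gives the increment over a dyadic rectangle. -/
def dyadicIncrement [Sub E] (F : ℕ → E) (x : (_ : ℕ) × ℕ) : E :=
  F (2 ^ x.1 * (x.2 + 1)) - F (2 ^ x.1 * x.2)

/-- The sum of the squared increments of `F` over all dyadic rectangles in `[0, 2 ^ K] ^ 2`, the
quantity that controls the maximum of `F` in the Rademacher–Menshov argument. -/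
def dyadicEnergy [SeminormedAddCommGroup E] (K : ℕ) (F : ℕ → ℕ → E) : ℝ :=
  ∑ x ∈ dyadicBlocks K, ∑ y ∈ dyadicBlocks K, ‖dyadicIncrement (dyadicIncrement F x) y‖ ^ 2

theorem dyadicEnergy_nonneg [SeminormedAddCommGroup E] (K : ℕ) (F : ℕ → ℕ → E) :
    0 ≤ dyadicEnergy K F := by
  unfold dyadicEnergy; positivity

theorem mem_dyadicBlocks {K : ℕ} {x : (_ : ℕ) × ℕ} :
    x ∈ dyadicBlocks K ↔ x.1 ≤ K ∧ x.2 < 2 ^ (K - x.1) := by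
  simp [dyadicBlocks]

theorem sum_dyadicBlocks {M : Type*} [AddCommMonoid M] (K : ℕ) (f : (_ : ℕ) × ℕ → M) :
    ∑ x ∈ dyadicBlocks K, f x =
      ∑ m ∈ Finset.range (K + 1), ∑ q ∈ Finset.range (2 ^ (K - m)), f ⟨m, q⟩ :=
  Finset.sum_sigma _ _ _

theorem right_endpoint_le_of_mem_dyadicBlocks {K : ℕ} {x : (_ : ℕ) × ℕ} (hx : x ∈ dyadicBlocks K) :
    2 ^ x.1 * (x.2 + 1) ≤ 2 ^ K := by
  obtain ⟨hm, hq⟩ := mem_dyadicBlocks.1 hx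
  calc 2 ^ x.1 * (x.2 + 1) ≤ 2 ^ x.1 * 2 ^ (K - x.1) := Nat.mul_le_mul_left _ hq
    _ = 2 ^ K := by rw [← pow_add, Nat.add_sub_cancel' hm]

theorem sum_dyadicBlocks_two_pow (K : ℕ) :
    ∑ x ∈ dyadicBlocks K, (2 : ℝ) ^ x.1 = (K + 1) * 2 ^ K := by
  have hlevel : ∀ m ∈ Finset.range (K + 1),
      ∑ _q ∈ Finset.range (2 ^ (K - m)), (2 : ℝ) ^ m = 2 ^ K := fun m hm => by
    simp [← pow_add, Nat.sub_add_cancel (Finset.mem_range_succ_iff.1 hm)]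
  rw [sum_dyadicBlocks, Finset.sum_congr rfl hlevel]
  simp

variable [SeminormedAddCommGroup E]

/-- Rounding `n` down to a multiple of `2 ^ m` moves it, as `m` grows by one, either not at all or
across the left half of a block, which is itself a dyadic block. -/
theorem norm_sq_sub_round_le_sum_increment_sq (F : ℕ → E) {K n m : ℕ} (hn : n ≤ 2 ^ K)
    (hm : m ≤ K) :
    ‖F (2 ^ m * (n / 2 ^ m)) - F (2 ^ (m + 1) * (n / 2 ^ (m + 1)))‖ ^ 2 ≤
      ∑ q ∈ Finset.range (2 ^ (K - m)), ‖dyadicIncrement F ⟨m, q⟩‖ ^ 2 := by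
  have hle : n / 2 ^ m ≤ 2 ^ (K - m) := by
    rw [← Nat.pow_div hm two_pos]
    exact Nat.div_le_div_right hn
  rw [pow_succ 2 m, ← Nat.div_div_eq_div_mul, mul_assoc]
  rcases Nat.even_or_odd' (n / 2 ^ m) with ⟨q, hq | hq⟩
  · rw [hq, Nat.mul_div_cancel_left _ two_pos, sub_self, norm_zero, zero_pow two_ne_zero]
    positivity
  · rw [hq, show (2 * q + 1) / 2 = q by omega]
    exact Finset.single_le_sum (f := fun q => ‖dyadicIncrement F ⟨m, q⟩‖ ^ 2)
      (fun _ _ => sq_nonneg _) (Finset.mem_range.2 (by omega : 2 * q < _))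

theorem norm_sub_sq_le_sum_dyadicIncrement_sq (F : ℕ → E) {K n : ℕ} (hn : n ≤ 2 ^ K) :
    ‖F n - F 0‖ ^ 2 ≤ (K + 1) * ∑ x ∈ dyadicBlocks K, ‖dyadicIncrement F x‖ ^ 2 := by
  have htelescope : F n - F 0 = ∑ m ∈ Finset.range (K + 1),
      (F (2 ^ m * (n / 2 ^ m)) - F (2 ^ (m + 1) * (n / 2 ^ (m + 1)))) := by
    have hlt : n < 2 ^ (K + 1) := hn.trans_lt (Nat.pow_lt_pow_succ one_lt_two)
    rw [Finset.sum_range_sub' fun m => F (2 ^ m * (n / 2 ^ m))]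
    simp [Nat.div_eq_of_lt hlt]
  calc ‖F n - F 0‖ ^ 2
      ≤ (∑ m ∈ Finset.range (K + 1),
          ‖F (2 ^ m * (n / 2 ^ m)) - F (2 ^ (m + 1) * (n / 2 ^ (m + 1)))‖) ^ 2 := by
        rw [htelescope]
        gcongr
        exact norm_sum_le _ _
    _ ≤ (K + 1) * ∑ m ∈ Finset.range (K + 1),
          ‖F (2 ^ m * (n / 2 ^ m)) - F (2 ^ (m + 1) * (n / 2 ^ (m + 1)))‖ ^ 2 := by
        simpa using sq_sum_le_card_mul_sum_sq (s := Finset.range (K + 1))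
          (f := fun m => ‖F (2 ^ m * (n / 2 ^ m)) - F (2 ^ (m + 1) * (n / 2 ^ (m + 1)))‖)
    _ ≤ (K + 1) * ∑ x ∈ dyadicBlocks K, ‖dyadicIncrement F x‖ ^ 2 := by
        rw [sum_dyadicBlocks]
        gcongr with m hm
        exact norm_sq_sub_round_le_sum_increment_sq F hn (Finset.mem_range_succ_iff.1 hm)

theorem norm_sq_le_dyadicEnergy {F : ℕ → ℕ → E} (hleft : ∀ j, F 0 j = 0) (hright : ∀ n, F n 0 = 0)
    {K n j : ℕ} (hn : n ≤ 2 ^ K) (hj : j ≤ 2 ^ K) :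
    ‖F n j‖ ^ 2 ≤ (K + 1) ^ 2 * dyadicEnergy K F := by
  calc ‖F n j‖ ^ 2
      ≤ (K + 1) * ∑ x ∈ dyadicBlocks K, ‖dyadicIncrement F x j‖ ^ 2 := by
        simpa [hleft, dyadicIncrement] using norm_sub_sq_le_sum_dyadicIncrement_sq (F · j) hn
    _ ≤ (K + 1) * ∑ x ∈ dyadicBlocks K, ((K + 1) *
          ∑ y ∈ dyadicBlocks K, ‖dyadicIncrement (dyadicIncrement F x) y‖ ^ 2) := by
        gcongr with x
        simpa [hright, dyadicIncrement] using
          norm_sub_sq_le_sum_dyadicIncrement_sq (dyadicIncrement F x) hj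
    _ = (K + 1) ^ 2 * dyadicEnergy K F := by
        rw [← Finset.mul_sum, ← mul_assoc, ← sq, dyadicEnergy]

end DyadicChaining

section StrongMixing

/-- Averaging `∑ p q, ε p * ε q * c p q` over all signs `ε` leaves the diagonal of `c`, so some
choice of signs, `1` on `A` and `-1` on `B`, does at least as well. -/
theorem exists_sum_diag_le_sum_signed {ι R : Type*} [CommRing R] [LinearOrder R]
    [IsStrictOrderedRing R] (c : ι → ι → R) (s : Finset ι) :
    ∃ A ⊆ s, ∃ B ⊆ s, ∑ p ∈ s, c p p ≤
      ∑ p ∈ A, ∑ q ∈ A, c p q + ∑ p ∈ B, ∑ q ∈ B, c p q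
        - ∑ p ∈ A, ∑ q ∈ B, c p q - ∑ p ∈ B, ∑ q ∈ A, c p q := by
  classical
  induction s using Finset.induction_on with
  | empty => exact ⟨∅, subset_rfl, ∅, subset_rfl, by simp⟩
  | insert a s ha ih =>
    obtain ⟨A, hA, B, hB, h⟩ := ih
    have haA : a ∉ A := fun h => ha (hA h)
    have haB : a ∉ B := fun h => ha (hB h)
    rcases le_total 0 (∑ q ∈ A, c a q + ∑ p ∈ A, c p a - ∑ q ∈ B, c a q - ∑ p ∈ B, c p a)
      with hsign | hsign
    · refine ⟨insert a A, Finset.insert_subset_insert _ hA,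
        B, hB.trans (Finset.subset_insert _ _), ?_⟩
      simp only [Finset.sum_insert ha, Finset.sum_insert haA, Finset.sum_add_distrib]
      linarith
    · refine ⟨A, hA.trans (Finset.subset_insert _ _),
        insert a B, Finset.insert_subset_insert _ hB, ?_⟩
      simp only [Finset.sum_insert ha, Finset.sum_insert haB, Finset.sum_add_distrib]
      linarith

theorem sum_Ico_dist_le {b : ℕ → ℝ} (hb : ∀ d, 0 ≤ b d) {a N i : ℕ}
    (hi : i ∈ Finset.Ico a (a + N)) :
    ∑ j ∈ Finset.Ico a (a + N), b (i.dist j) ≤ 2 * ∑ d ∈ Finset.range N, b d := by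
  have hmaps : ∀ j ∈ Finset.Ico a (a + N), i.dist j ∈ Finset.range N := fun j hj => by
    simp only [Finset.mem_Ico, Finset.mem_range, Nat.dist] at hi hj ⊢
    omega
  have hfiber : ∀ d, ((Finset.Ico a (a + N)).filter fun j => i.dist j = d).card ≤ 2 := fun d => by
    have hsub : ((Finset.Ico a (a + N)).filter fun j => i.dist j = d) ⊆ {i - d, i + d} := by
      intro j hj
      have hjd : i - j + (j - i) = d := (Finset.mem_filter.1 hj).2
      rw [Finset.mem_insert, Finset.mem_singleton]
      omega
    exact (Finset.card_le_card hsub).trans Finset.card_le_two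
  rw [← Finset.sum_fiberwise_of_maps_to' hmaps, Finset.mul_sum]
  gcongr with d
  rw [Finset.sum_const, nsmul_eq_mul]
  exact mul_le_mul_of_nonneg_right (by exact_mod_cast hfiber d) (hb d)

variable {Ω 𝓧 𝓨 : Type*} [MeasurableSpace Ω] [MeasurableSpace 𝓧] [MeasurableSpace 𝓨]
  {P : Measure Ω}

/-- The strong mixing coefficient `α(X, Y) = sup |P(X ∈ S, Y ∈ T) - P(X ∈ S) P(Y ∈ T)|` is at most
`a`. It is stated as a bound, so that no supremum of a possibly unbounded set is involved. -/
def StrongMixingLE (P : Measure Ω) (X : Ω → 𝓧) (Y : Ω → 𝓨) (a : ℝ) : Prop :=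
  ∀ ⦃S⦄, MeasurableSet S → ∀ ⦃T⦄, MeasurableSet T →
    |P.real (X ⁻¹' S ∩ Y ⁻¹' T) - P.real (X ⁻¹' S) * P.real (Y ⁻¹' T)| ≤ a

theorem abs_measureReal_inter_sub_mul_le_one [IsProbabilityMeasure P] (A B : Set Ω) :
    |P.real (A ∩ B) - P.real A * P.real B| ≤ 1 := by
  have hinter : P.real (A ∩ B) ∈ Icc 0 1 := ⟨measureReal_nonneg, measureReal_le_one⟩
  have hmul : P.real A * P.real B ∈ Icc 0 1 := ⟨by positivity,
    mul_le_one₀ measureReal_le_one measureReal_nonneg measureReal_le_one⟩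
  simpa using abs_sub_le_of_le_of_le hinter.1 hinter.2 hmul.1 hmul.2

theorem memLp_indicator_one [IsFiniteMeasure P] {A : Set Ω} (hA : MeasurableSet A) (p : ℝ≥0∞) :
    MemLp (A.indicator (1 : Ω → ℝ)) p P :=
  memLp_indicator_const p hA 1 (.inr (by finiteness))

theorem covariance_indicator_one [IsProbabilityMeasure P] {A B : Set Ω} (hA : MeasurableSet A)
    (hB : MeasurableSet B) :
    cov[A.indicator 1, B.indicator 1; P] = P.real (A ∩ B) - P.real A * P.real B := by
  rw [covariance_eq_sub (memLp_indicator_one hA 2) (memLp_indicator_one hB 2),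
    ← inter_indicator_one, integral_indicator_one hA, integral_indicator_one hB,
    integral_indicator_one (hA.inter hB)]

theorem sum_indicator_preimage_eq {α β ι : Type*} {X : α → β} {A : Finset ι} {S : ι → Set β}
    (hS : Set.PairwiseDisjoint A S) :
    ∑ p ∈ A, (X ⁻¹' S p).indicator (1 : α → ℝ) = (X ⁻¹' ⋃ p ∈ A, S p).indicator 1 := by
  rw [preimage_iUnion₂, A.indicator_biUnion _ fun p hp q hq hpq => (hS hp hq hpq).preimage X]
  ext
  rw [Finset.sum_apply]

namespace StrongMixingLE

variable {X : Ω → 𝓧} {Y : Ω → 𝓨} {a b : ℝ}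

theorem one [IsProbabilityMeasure P] (X : Ω → 𝓧) (Y : Ω → 𝓨) : StrongMixingLE P X Y 1 :=
  fun _ _ _ _ => abs_measureReal_inter_sub_mul_le_one _ _

theorem mono (h : StrongMixingLE P X Y a) (hab : a ≤ b) : StrongMixingLE P X Y b :=
  fun _ hS _ hT => (h hS hT).trans hab

theorem symm (h : StrongMixingLE P X Y a) : StrongMixingLE P Y X a := fun S hS T hT => by
  rw [inter_comm, mul_comm]
  exact h hT hS

theorem nonneg (h : StrongMixingLE P X Y a) : 0 ≤ a :=
  (abs_nonneg _).trans (h MeasurableSet.empty MeasurableSet.empty)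

/-- Rio's argument: by bilinearity, each of the four sums in `exists_sum_diag_le_sum_signed` is a
single covariance of indicators of unions of the sets. -/
theorem sum_covariance_indicator_le [IsProbabilityMeasure P] {ι : Type*}
    (h : StrongMixingLE P X Y a) (hX : Measurable X) (hY : Measurable Y) {s : Finset ι}
    {S : ι → Set 𝓧} {T : ι → Set 𝓨} (hS : ∀ p, MeasurableSet (S p)) (hT : ∀ p, MeasurableSet (T p))
    (hSd : Set.PairwiseDisjoint s S) (hTd : Set.PairwiseDisjoint s T) :
    ∑ p ∈ s, cov[(X ⁻¹' S p).indicator 1, (Y ⁻¹' T p).indicator 1; P] ≤ 4 * a := by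
  have hbilinear : ∀ A ⊆ s, ∀ B ⊆ s,
      |∑ p ∈ A, ∑ q ∈ B, cov[(X ⁻¹' S p).indicator 1, (Y ⁻¹' T q).indicator 1; P]| ≤ a := by
    intro A hA B hB
    have hSA : MeasurableSet (⋃ p ∈ A, S p) := A.measurableSet_biUnion fun p _ => hS p
    have hTB : MeasurableSet (⋃ q ∈ B, T q) := B.measurableSet_biUnion fun q _ => hT q
    rw [← covariance_sum_sum' (fun p _ => memLp_indicator_one (hX (hS p)) 2)
      (fun q _ => memLp_indicator_one (hY (hT q)) 2),
      sum_indicator_preimage_eq (hSd.subset (Finset.coe_subset.2 hA)),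
      sum_indicator_preimage_eq (hTd.subset (Finset.coe_subset.2 hB)),
      covariance_indicator_one (hX hSA) (hY hTB)]
    exact h hSA hTB
  obtain ⟨A, hA, B, hB, hdiag⟩ := exists_sum_diag_le_sum_signed
    (fun p q => cov[(X ⁻¹' S p).indicator 1, (Y ⁻¹' T q).indicator 1; P]) s
  have hAA := abs_le.1 (hbilinear A hA A hA)
  have hBB := abs_le.1 (hbilinear B hB B hB)
  have hAB := abs_le.1 (hbilinear A hA B hB)
  have hBA := abs_le.1 (hbilinear B hB A hA)
  linarith

end StrongMixingLE

theorem sum_variance_sum_indicator_le [IsProbabilityMeasure P] {X : ℕ → Ω → 𝓧}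
    (hX : ∀ i, Measurable (X i)) {b : ℕ → ℝ}
    (hb : ∀ k d, StrongMixingLE P (X k) (X (k + d)) (b d)) {ι : Type*} {s : Finset ι}
    {S : ι → Set 𝓧} (hS : ∀ p, MeasurableSet (S p)) (hSd : Set.PairwiseDisjoint s S) (a N : ℕ) :
    ∑ p ∈ s, Var[∑ i ∈ Finset.Ico a (a + N), (X i ⁻¹' S p).indicator 1; P] ≤
      8 * N * ∑ d ∈ Finset.range N, b d := by
  have hdist : ∀ i j, StrongMixingLE P (X i) (X j) (b (i.dist j)) := fun i j => by
    rcases le_total i j with hij | hij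
    · simpa [Nat.dist_eq_sub_of_le hij, Nat.add_sub_cancel' hij] using hb i (j - i)
    · simpa [Nat.dist_eq_sub_of_le_right hij, Nat.add_sub_cancel' hij] using (hb j (i - j)).symm
  calc ∑ p ∈ s, Var[∑ i ∈ Finset.Ico a (a + N), (X i ⁻¹' S p).indicator 1; P]
      = ∑ p ∈ s, ∑ i ∈ Finset.Ico a (a + N), ∑ j ∈ Finset.Ico a (a + N),
          cov[(X i ⁻¹' S p).indicator 1, (X j ⁻¹' S p).indicator 1; P] :=
        Finset.sum_congr rfl fun p _ => variance_sum' fun i _ => memLp_indicator_one (hX i (hS p)) 2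
    _ = ∑ i ∈ Finset.Ico a (a + N), ∑ j ∈ Finset.Ico a (a + N), ∑ p ∈ s,
          cov[(X i ⁻¹' S p).indicator 1, (X j ⁻¹' S p).indicator 1; P] := by
        rw [Finset.sum_comm]
        exact Finset.sum_congr rfl fun i _ => Finset.sum_comm
    _ ≤ ∑ i ∈ Finset.Ico a (a + N), ∑ j ∈ Finset.Ico a (a + N), 4 * b (i.dist j) := by
        gcongr with i _ j _
        exact (hdist i j).sum_covariance_indicator_le (hX i) (hX j) hS hS hSd hSd
    _ ≤ ∑ _i ∈ Finset.Ico a (a + N), 4 * (2 * ∑ d ∈ Finset.range N, b d) := by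
        gcongr with i hi
        rw [← Finset.mul_sum]
        gcongr
        exact sum_Ico_dist_le (fun d => (hb 0 d).nonneg) hi
    _ = 8 * N * ∑ d ∈ Finset.range N, b d := by
        simp; ring

end StrongMixing

section EmpiricalDeviation

variable {Ω : Type*} {U : ℕ → Ω → ℝ}

/-- The unnormalised empirical process `n * (Ĝ_n(t) - t)`. -/
noncomputable def empDev (U : ℕ → Ω → ℝ) (ω : Ω) (n : ℕ) (t : ℝ) : ℝ :=
  ∑ i ∈ Finset.range n, ((U i ⁻¹' Iic t).indicator 1 ω - t)

theorem mul_empDF_sub (U : ℕ → Ω → ℝ) (ω : Ω) (n : ℕ) (t : ℝ) :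
    n * (empDF U n ω t - t) = empDev U ω n t := by
  classical
  rcases eq_or_ne n 0 with rfl | hn
  · simp [empDev]
  · have hcard : n * empDF U n ω t = ∑ i ∈ Finset.range n, (U i ⁻¹' Iic t).indicator 1 ω := by
      simp [empDF, indicator_apply, Finset.sum_boole, mul_div_cancel₀, hn]
    rw [mul_sub, hcard, empDev, Finset.sum_sub_distrib]
    simp

theorem empDev_level_zero {ω : Ω} (hpos : ∀ i, 0 < U i ω) (n : ℕ) : empDev U ω n 0 = 0 := by
  simp [empDev, (hpos _).not_ge]

theorem monotone_empDev_add_mul (U : ℕ → Ω → ℝ) (ω : Ω) (n : ℕ) :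
    Monotone fun t => empDev U ω n t + n * t := by
  have hcount : ∀ t, empDev U ω n t + n * t =
      ∑ i ∈ Finset.range n, (U i ⁻¹' Iic t).indicator 1 ω := fun t => by
    simp [empDev, Finset.sum_sub_distrib]
  intro s t hst
  simp only [hcount]
  exact Finset.sum_le_sum fun i _ => indicator_le_indicator_apply_of_subset
    (preimage_mono (Iic_subset_Iic.2 hst)) (zero_le_one' ℝ)

theorem empDev_rectangle_increment (U : ℕ → Ω → ℝ) (ω : Ω) {a b : ℕ} (hab : a ≤ b) {s t : ℝ}
    (hst : s ≤ t) :
    empDev U ω b t - empDev U ω a t - (empDev U ω b s - empDev U ω a s) =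
      (∑ i ∈ Finset.Ico a b, (U i ⁻¹' Ioc s t).indicator 1) ω - (b - a) * (t - s) := by
  have hIoc : ∀ i, (U i ⁻¹' Ioc s t).indicator (1 : Ω → ℝ) =
      (U i ⁻¹' Iic t).indicator 1 - (U i ⁻¹' Iic s).indicator 1 := fun i => by
    rw [← Iic_sdiff_Iic, preimage_sdiff,
      indicator_sdiff (preimage_mono (Iic_subset_Iic.2 hst))]
  simp only [empDev, ← Finset.sum_Ico_eq_sub _ hab, ← Finset.sum_sub_distrib, hIoc,
    Finset.sum_apply, Pi.sub_apply, ← Nat.cast_sub hab]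
  rw [← Nat.card_Ico, ← nsmul_eq_mul, ← Finset.sum_const, ← Finset.sum_sub_distrib]
  exact Finset.sum_congr rfl fun i _ => by ring

/-- Between consecutive grid points, `f` leaves the range of its values at these points by at most
`c / N`, by comparison with the monotone function `f t + c * t`. -/
theorem abs_le_add_div_of_abs_le_on_grid {f : ℝ → ℝ} {c M : ℝ} {N : ℕ} (hc : 0 ≤ c)
    (hN : N ≠ 0) (hf : Monotone fun t => f t + c * t) (hgrid : ∀ j ≤ N, |f (j / N)| ≤ M) {t : ℝ}
    (ht : t ∈ Icc 0 1) : |f t| ≤ M + c / N := by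
  have hN' : (0 : ℝ) < N := by positivity
  have htN0 : 0 ≤ t * N := mul_nonneg ht.1 hN'.le
  have htN : t * N ≤ N := mul_le_of_le_one_left hN'.le ht.2
  have hleft : (⌊t * N⌋₊ : ℝ) / N ≤ t := (div_le_iff₀ hN').2 (Nat.floor_le htN0)
  have hright : t ≤ (⌈t * N⌉₊ : ℝ) / N := (le_div_iff₀ hN').2 (Nat.le_ceil _)
  have hfloor := abs_le.1 (hgrid ⌊t * N⌋₊ (Nat.floor_le_of_le htN))
  have hceil := abs_le.1 (hgrid ⌈t * N⌉₊ (Nat.ceil_le.2 htN))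
  have hlower : t - 1 / N ≤ (⌊t * N⌋₊ : ℝ) / N := by
    rw [sub_le_iff_le_add, ← add_div, le_div_iff₀ hN']
    exact (Nat.lt_floor_add_one _).le
  have hupper : (⌈t * N⌉₊ : ℝ) / N ≤ t + 1 / N := by
    rw [← sub_le_iff_le_add, ← sub_div, div_le_iff₀ hN']
    linarith [Nat.ceil_lt_add_one htN0]
  have hfl := hf hleft
  have hfr := hf hright
  have hcl := mul_le_mul_of_nonneg_left hlower hc
  have hcr := mul_le_mul_of_nonneg_left hupper hc
  dsimp only at hfl hfr
  rw [mul_sub, mul_one_div] at hcl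
  rw [mul_add, mul_one_div] at hcr
  exact abs_le.2 ⟨by linarith, by linarith⟩

/-- The unnormalised empirical process at the levels `j / 2 ^ K`, as a function of two integers to
which dyadic chaining applies. -/
noncomputable def gridDev (U : ℕ → Ω → ℝ) (K : ℕ) (ω : Ω) (n j : ℕ) : ℝ :=
  empDev U ω n (j / 2 ^ K)

theorem abs_gridDev_le {K : ℕ} {ω : Ω} (hpos : ∀ i, 0 < U i ω) {n j : ℕ} (hn : n ≤ 2 ^ K)
    (hj : j ≤ 2 ^ K) : |gridDev U K ω n j| ≤ (K + 1) * √(dyadicEnergy K (gridDev U K ω)) := by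
  refine abs_le_of_sq_le_sq ?_ (by positivity)
  rw [mul_pow, Real.sq_sqrt (dyadicEnergy_nonneg _ _), ← sq_abs]
  exact norm_sq_le_dyadicEnergy (F := gridDev U K ω) (fun j => by simp [gridDev, empDev])
    (fun n => by simp [gridDev, empDev_level_zero hpos]) hn hj

theorem mul_iSup_abs_empDF_sub_le {K : ℕ} {ω : Ω} (hpos : ∀ i, 0 < U i ω) {n : ℕ}
    (hn : n ≤ 2 ^ K) :
    n * ⨆ t : Icc (0 : ℝ) 1, |empDF U n ω t - t| ≤
      (K + 1) * √(dyadicEnergy K (gridDev U K ω)) + 1 := by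
  rw [Real.mul_iSup_of_nonneg n.cast_nonneg]
  refine ciSup_le fun t => ?_
  calc n * |empDF U n ω t - t| = |empDev U ω n t| := by
        rw [← mul_empDF_sub, abs_mul, Nat.abs_cast]
    _ ≤ (K + 1) * √(dyadicEnergy K (gridDev U K ω)) + n / (2 ^ K : ℕ) :=
        abs_le_add_div_of_abs_le_on_grid n.cast_nonneg (by positivity)
          (monotone_empDev_add_mul U ω n)
          (fun j hj => by simpa [gridDev] using abs_gridDev_le hpos hn hj) t.2
    _ ≤ (K + 1) * √(dyadicEnergy K (gridDev U K ω)) + 1 := by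
        gcongr
        exact div_le_one_of_le₀ (by exact_mod_cast hn) (Nat.cast_nonneg _)

end EmpiricalDeviation

section EnergyBound

variable {Ω : Type*} [MeasurableSpace Ω] {P : Measure Ω}

theorem measureReal_preimage_Ioc_of_map_eq {X : Ω → ℝ} (hX : Measurable X)
    (hunif : Measure.map X P = volume.restrict (Icc 0 1)) {s t : ℝ} (hs : 0 ≤ s) (hst : s ≤ t)
    (ht : t ≤ 1) : P.real (X ⁻¹' Ioc s t) = t - s := by
  have hsub : Ioc s t ⊆ Icc 0 1 := Ioc_subset_Icc_self.trans (Icc_subset_Icc hs ht)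
  rw [← map_measureReal_apply hX measurableSet_Ioc, hunif,
    measureReal_restrict_apply measurableSet_Ioc, inter_eq_left.2 hsub,
    Real.volume_real_Ioc_of_le hst]

theorem ae_pos_of_map_eq {X : Ω → ℝ} (hX : Measurable X)
    (hunif : Measure.map X P = volume.restrict (Icc 0 1)) : ∀ᵐ ω ∂P, 0 < X ω := by
  refine ae_of_ae_map hX.aemeasurable (p := (0 < ·)) ?_
  rw [hunif, ← restrict_Ioc_eq_restrict_Icc]
  exact (ae_restrict_mem measurableSet_Ioc).mono fun _ hx => hx.1

/-- The dyadic block `y` rescaled by `2 ^ (-K)`, half-open so that the cells of one level are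
disjoint. -/
def gridCell (K : ℕ) (y : (_ : ℕ) × ℕ) : Set ℝ :=
  Ioc ((2 ^ y.1 * y.2 : ℕ) / 2 ^ K) ((2 ^ y.1 * (y.2 + 1) : ℕ) / 2 ^ K)

theorem pairwise_disjoint_gridCell (K l : ℕ) :
    Pairwise (Function.onFun Disjoint fun p => gridCell K ⟨l, p⟩) := by
  have hmono : Monotone fun p : ℕ => ((2 ^ l * p : ℕ) : ℝ) / 2 ^ K := fun p q hpq => by
    dsimp only
    gcongr
  exact hmono.pairwise_disjoint_on_Ioc_succ

/-- The number of points `U i` that lie in the cell of `y`, for `i` in the dyadic block `x`.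
Centred, it is the increment of `gridDev` over the rectangle with sides `x` and `y`. -/
noncomputable def blockCount (U : ℕ → Ω → ℝ) (K : ℕ) (x y : (_ : ℕ) × ℕ) : Ω → ℝ :=
  ∑ i ∈ Finset.Ico (2 ^ x.1 * x.2) (2 ^ x.1 * x.2 + 2 ^ x.1), (U i ⁻¹' gridCell K y).indicator 1

variable {U : ℕ → Ω → ℝ}

theorem memLp_blockCount [IsFiniteMeasure P] (hmeas : ∀ i, Measurable (U i)) (K : ℕ)
    (x y : (_ : ℕ) × ℕ) (p : ℝ≥0∞) : MemLp (blockCount U K x y) p P :=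
  memLp_finsetSum' _ fun i _ => memLp_indicator_one (hmeas i measurableSet_Ioc) p

theorem dyadicIncrement_gridDev [IsProbabilityMeasure P] (hmeas : ∀ i, Measurable (U i))
    (hunif : ∀ i, Measure.map (U i) P = volume.restrict (Icc 0 1)) {K : ℕ} (x : (_ : ℕ) × ℕ)
    {y : (_ : ℕ) × ℕ} (hy : y ∈ dyadicBlocks K) (ω : Ω) :
    dyadicIncrement (dyadicIncrement (gridDev U K ω) x) y =
      blockCount U K x y ω - P[blockCount U K x y] := by
  obtain ⟨m, q⟩ := x
  obtain ⟨l, p⟩ := y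
  have hst : ((2 ^ l * p : ℕ) : ℝ) / 2 ^ K ≤ ((2 ^ l * (p + 1) : ℕ) : ℝ) / 2 ^ K := by
    gcongr; omega
  have ht : ((2 ^ l * (p + 1) : ℕ) : ℝ) / 2 ^ K ≤ 1 := div_le_one_of_le₀
    (by exact_mod_cast right_endpoint_le_of_mem_dyadicBlocks hy) (by positivity)
  have hmean : P[blockCount U K ⟨m, q⟩ ⟨l, p⟩] =
      2 ^ m * (((2 ^ l * (p + 1) : ℕ) : ℝ) / 2 ^ K - ((2 ^ l * p : ℕ) : ℝ) / 2 ^ K) := by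
    have hcell : ∀ i, MeasurableSet (U i ⁻¹' gridCell K ⟨l, p⟩) :=
      fun i => hmeas i measurableSet_Ioc
    have hprob : ∀ i, ∫ ω, (U i ⁻¹' gridCell K ⟨l, p⟩).indicator 1 ω ∂P =
        ((2 ^ l * (p + 1) : ℕ) : ℝ) / 2 ^ K - ((2 ^ l * p : ℕ) : ℝ) / 2 ^ K := fun i =>
      (integral_indicator_one (hcell i)).trans
        (measureReal_preimage_Ioc_of_map_eq (hmeas i) (hunif i) (by positivity) hst ht)
    simp only [blockCount, Finset.sum_apply]
    rw [integral_finsetSum _ fun i _ => (memLp_indicator_one (hcell i) 1).integrable le_rfl]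
    simp only [hprob, Finset.sum_const, Nat.card_Ico, Nat.add_sub_cancel_left, nsmul_eq_mul,
      Nat.cast_pow, Nat.cast_ofNat]
  rw [hmean]
  simpa [dyadicIncrement, gridDev, blockCount, gridCell, mul_add] using
    empDev_rectangle_increment U ω (Nat.le_add_right (2 ^ m * q) (2 ^ m)) hst

theorem sum_variance_blockCount_le [IsProbabilityMeasure P] (hmeas : ∀ i, Measurable (U i))
    {b : ℕ → ℝ} (hb : ∀ k d, StrongMixingLE P (U k) (U (k + d)) (b d)) {K : ℕ} {x : (_ : ℕ) × ℕ}
    (hx : x ∈ dyadicBlocks K) (l : ℕ) :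
    ∑ p ∈ Finset.range (2 ^ (K - l)), Var[blockCount U K x ⟨l, p⟩; P] ≤
      8 * 2 ^ x.1 * ∑ d ∈ Finset.range (2 ^ K), b d := by
  calc ∑ p ∈ Finset.range (2 ^ (K - l)), Var[blockCount U K x ⟨l, p⟩; P]
      ≤ 8 * (2 ^ x.1 : ℕ) * ∑ d ∈ Finset.range (2 ^ x.1), b d :=
        sum_variance_sum_indicator_le hmeas hb (fun _ => measurableSet_Ioc)
          ((pairwise_disjoint_gridCell K l).set_pairwise _) _ _
    _ ≤ 8 * 2 ^ x.1 * ∑ d ∈ Finset.range (2 ^ K), b d := by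
        rw [Nat.cast_pow, Nat.cast_ofNat]
        gcongr
        · exact fun d _ _ => (hb 0 d).nonneg
        · exact one_le_two
        · exact (mem_dyadicBlocks.1 hx).1

theorem integrable_dyadicIncrement_gridDev_sq [IsProbabilityMeasure P]
    (hmeas : ∀ i, Measurable (U i))
    (hunif : ∀ i, Measure.map (U i) P = volume.restrict (Icc 0 1)) {K : ℕ} (x : (_ : ℕ) × ℕ)
    {y : (_ : ℕ) × ℕ} (hy : y ∈ dyadicBlocks K) :
    Integrable (fun ω => ‖dyadicIncrement (dyadicIncrement (gridDev U K ω) x) y‖ ^ 2) P := by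
  simp only [dyadicIncrement_gridDev hmeas hunif x hy]
  exact ((memLp_blockCount hmeas K x y 2).sub (memLp_const _)).integrable_norm_pow two_ne_zero

theorem integral_dyadicIncrement_gridDev_sq [IsProbabilityMeasure P]
    (hmeas : ∀ i, Measurable (U i))
    (hunif : ∀ i, Measure.map (U i) P = volume.restrict (Icc 0 1)) {K : ℕ} (x : (_ : ℕ) × ℕ)
    {y : (_ : ℕ) × ℕ} (hy : y ∈ dyadicBlocks K) :
    ∫ ω, ‖dyadicIncrement (dyadicIncrement (gridDev U K ω) x) y‖ ^ 2 ∂P =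
      Var[blockCount U K x y; P] := by
  rw [variance_eq_integral (memLp_blockCount hmeas K x y 2).aemeasurable]
  simp only [dyadicIncrement_gridDev hmeas hunif x hy, Real.norm_eq_abs, sq_abs]

theorem integrable_dyadicEnergy_gridDev [IsProbabilityMeasure P] (hmeas : ∀ i, Measurable (U i))
    (hunif : ∀ i, Measure.map (U i) P = volume.restrict (Icc 0 1)) (K : ℕ) :
    Integrable (fun ω => dyadicEnergy K (gridDev U K ω)) P :=
  integrable_finsetSum _ fun x _ => integrable_finsetSum _ fun _ hy =>
    integrable_dyadicIncrement_gridDev_sq hmeas hunif x hy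

theorem integral_dyadicEnergy_gridDev_le [IsProbabilityMeasure P] (hmeas : ∀ i, Measurable (U i))
    (hunif : ∀ i, Measure.map (U i) P = volume.restrict (Icc 0 1)) {b : ℕ → ℝ}
    (hb : ∀ k d, StrongMixingLE P (U k) (U (k + d)) (b d)) (K : ℕ) :
    ∫ ω, dyadicEnergy K (gridDev U K ω) ∂P ≤
      8 * (K + 1) ^ 2 * 2 ^ K * ∑ d ∈ Finset.range (2 ^ K), b d := by
  calc ∫ ω, dyadicEnergy K (gridDev U K ω) ∂P
      = ∑ x ∈ dyadicBlocks K, ∑ y ∈ dyadicBlocks K, Var[blockCount U K x y; P] := by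
        unfold dyadicEnergy
        rw [integral_finsetSum _ fun x _ => integrable_finsetSum _ fun y hy =>
          integrable_dyadicIncrement_gridDev_sq hmeas hunif x hy]
        refine Finset.sum_congr rfl fun x _ => ?_
        rw [integral_finsetSum _ fun y hy => integrable_dyadicIncrement_gridDev_sq hmeas hunif x hy]
        exact Finset.sum_congr rfl fun y hy => integral_dyadicIncrement_gridDev_sq hmeas hunif x hy
    _ ≤ ∑ x ∈ dyadicBlocks K, ∑ _l ∈ Finset.range (K + 1),
          8 * 2 ^ x.1 * ∑ d ∈ Finset.range (2 ^ K), b d := by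
        gcongr with x hx
        rw [sum_dyadicBlocks]
        gcongr with l _
        exact sum_variance_blockCount_le hmeas hb hx l
    _ = 8 * (K + 1) * (∑ x ∈ dyadicBlocks K, (2 : ℝ) ^ x.1) * ∑ d ∈ Finset.range (2 ^ K), b d := by
        rw [Finset.mul_sum (dyadicBlocks K), Finset.sum_mul]
        refine Finset.sum_congr rfl fun x _ => ?_
        rw [Finset.sum_const, Finset.card_range, nsmul_eq_mul, Nat.cast_succ]
        ring
    _ = 8 * (K + 1) ^ 2 * 2 ^ K * ∑ d ∈ Finset.range (2 ^ K), b d := by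
        rw [sum_dyadicBlocks_two_pow]
        ring

end EnergyBound

section RealSequences

theorem tendsto_rpow_mul_of_le_dyadic {D a : ℕ → ℝ} {r : ℝ} (hr : r ≤ 1) (hD : ∀ n, 0 ≤ D n)
    (hle : ∀ K n, n ≤ 2 ^ K → n * D n ≤ a K)
    (ha : Tendsto (fun K : ℕ => a K * ((2 : ℝ) ^ K) ^ (r - 1)) atTop (𝓝 0)) :
    Tendsto (fun n : ℕ => (n : ℝ) ^ r * D n) atTop (𝓝 0) := by
  have hlog : Tendsto (fun n => Nat.log 2 n + 1) atTop atTop :=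
    (tendsto_add_atTop_nat 1).comp <| tendsto_atTop_atTop.2 fun k =>
      ⟨2 ^ k, fun _ hn => Nat.le_log_of_pow_le one_lt_two hn⟩
  have hlim := (ha.comp hlog).mul_const ((1 / 2 : ℝ) ^ (r - 1))
  rw [zero_mul] at hlim
  refine squeeze_zero' (.of_forall fun n => by have := hD n; positivity) ?_ hlim
  filter_upwards [eventually_ge_atTop 1] with n hn
  have hpos : (0 : ℝ) < n := by exact_mod_cast hn
  have hlt : n < 2 ^ (Nat.log 2 n + 1) := Nat.lt_pow_succ_log_self one_lt_two n
  have hge : (2 : ℝ) ^ (Nat.log 2 n + 1) * (1 / 2) ≤ n := by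
    rw [pow_succ, mul_assoc, mul_one_div_cancel two_ne_zero, mul_one]
    exact_mod_cast Nat.pow_log_le_self 2 (Nat.one_le_iff_ne_zero.1 hn)
  have hbound := hle _ n hlt.le
  calc (n : ℝ) ^ r * D n = n * D n * (n : ℝ) ^ (r - 1) := by
        rw [Real.rpow_sub_one hpos.ne']
        field_simp
    _ ≤ a (Nat.log 2 n + 1) * ((2 : ℝ) ^ (Nat.log 2 n + 1) * (1 / 2)) ^ (r - 1) :=
        mul_le_mul hbound (Real.rpow_le_rpow_of_nonpos (by positivity) hge (by linarith))
          (by positivity) ((mul_nonneg hpos.le (hD n)).trans hbound)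
    _ = a (Nat.log 2 n + 1) * ((2 : ℝ) ^ (Nat.log 2 n + 1)) ^ (r - 1) * (1 / 2) ^ (r - 1) := by
        rw [Real.mul_rpow (by positivity) (by positivity), mul_assoc]

theorem sum_range_rpow_neg_le {θ : ℝ} (hθ : θ ≤ 1) (N : ℕ) :
    ∑ d ∈ Finset.range N, ((d : ℝ) + 1) ^ (-θ) ≤ (N : ℝ) ^ (1 - θ) * (1 + Real.log N) := by
  calc ∑ d ∈ Finset.range N, ((d : ℝ) + 1) ^ (-θ)
      ≤ ∑ d ∈ Finset.range N, (N : ℝ) ^ (1 - θ) * ((d : ℝ) + 1)⁻¹ := by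
        gcongr with d hd
        have hdN : (d : ℝ) + 1 ≤ N := by exact_mod_cast Finset.mem_range.1 hd
        rw [show -θ = 1 - θ - 1 by ring, Real.rpow_sub_one (by positivity), div_eq_mul_inv]
        gcongr
    _ = (N : ℝ) ^ (1 - θ) * (harmonic N : ℚ) := by
        simp [harmonic, Finset.mul_sum]
    _ ≤ (N : ℝ) ^ (1 - θ) * (1 + Real.log N) := by
        gcongr
        exact harmonic_le_one_add_log N

theorem rpow_neg_le_two_mul_succ_rpow_neg_min {n : ℕ} (hn : 1 ≤ n) (ϑ : ℝ) :
    (n : ℝ) ^ (-ϑ) ≤ 2 * ((n : ℝ) + 1) ^ (-min ϑ 1) := by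
  have hn' : (1 : ℝ) ≤ n := by exact_mod_cast hn
  have hshift : ∀ x : ℝ, 0 < x → x ^ (-min ϑ 1) = x ^ (1 - min ϑ 1) * x⁻¹ := fun x hx => by
    rw [show -min ϑ 1 = 1 - min ϑ 1 - 1 by ring, Real.rpow_sub_one hx.ne', div_eq_mul_inv]
  calc (n : ℝ) ^ (-ϑ) ≤ (n : ℝ) ^ (-min ϑ 1) :=
        Real.rpow_le_rpow_of_exponent_le hn' (neg_le_neg (min_le_left _ _))
    _ = (n : ℝ) ^ (1 - min ϑ 1) * (n : ℝ)⁻¹ := hshift n (by positivity)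
    _ ≤ ((n : ℝ) + 1) ^ (1 - min ϑ 1) * (2 * ((n : ℝ) + 1)⁻¹) := by
        gcongr
        · linarith [min_le_right ϑ 1]
        · linarith
        · rw [← div_eq_mul_inv, inv_eq_one_div, div_le_div_iff₀ (by positivity) (by positivity)]
          linarith
    _ = 2 * ((n : ℝ) + 1) ^ (-min ϑ 1) := by
        rw [hshift _ (by positivity)]
        ring

theorem summable_add_one_pow_mul_two_pow_rpow (k : ℕ) {s : ℝ} (hs : s < 0) :
    Summable fun K : ℕ => ((K : ℝ) + 1) ^ k * ((2 : ℝ) ^ K) ^ s := by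
  have hratio : ‖(2 : ℝ) ^ s‖ < 1 := by
    rw [Real.norm_of_nonneg (by positivity)]
    exact Real.rpow_lt_one_of_one_lt_of_neg one_lt_two hs
  have hshift := (summable_pow_mul_geometric_of_norm_lt_one k hratio).comp_injective
    (add_left_injective 1)
  refine (hshift.mul_right ((2 : ℝ) ^ s)⁻¹).congr fun K => ?_
  rw [← Real.rpow_pow_comm two_pos.le, Function.comp_apply, pow_succ, Nat.cast_succ, mul_assoc,
    mul_assoc, mul_inv_cancel₀ (by positivity), mul_one]

theorem tendsto_mul_sqrt_add_one_mul_rpow {r : ℝ} (hr : r < 1) {e : ℕ → ℝ}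
    (he : Tendsto (fun K : ℕ => (((K : ℝ) + 1) * ((2 : ℝ) ^ K) ^ (r - 1)) ^ 2 * e K)
      atTop (𝓝 0)) :
    Tendsto (fun K : ℕ => ((K + 1) * √(e K) + 1) * ((2 : ℝ) ^ K) ^ (r - 1)) atTop (𝓝 0) := by
  have hsqrt := (Real.continuous_sqrt.tendsto 0).comp he
  have hpow := (tendsto_rpow_neg_atTop (sub_pos.2 hr)).comp
    (tendsto_pow_atTop_atTop_of_one_lt (one_lt_two (α := ℝ)))
  rw [Real.sqrt_zero] at hsqrt
  refine (by simpa using hsqrt.add hpow : Tendsto _ _ (𝓝 (0 : ℝ))).congr fun K => ?_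
  rw [Real.sqrt_mul (sq_nonneg _), Real.sqrt_sq (by positivity)]
  ring

end RealSequences

section AlmostSureConvergence

variable {Ω : Type*} [MeasurableSpace Ω] {P : Measure Ω}

theorem ae_tendsto_zero_of_summable_integral {ι : Type*} [Countable ι] {f : ι → Ω → ℝ}
    (hf : ∀ i, Integrable (f i) P) (hf0 : ∀ i, 0 ≤ᵐ[P] f i)
    (hsum : Summable fun i => ∫ ω, f i ω ∂P) :
    ∀ᵐ ω ∂P, Tendsto (fun i => f i ω) cofinite (𝓝 0) := by
  have hmeas : ∀ i, AEMeasurable (fun ω => ENNReal.ofReal (f i ω)) P :=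
    fun i => (hf i).aemeasurable.ennreal_ofReal
  have hfin : ∫⁻ ω, ∑' i, ENNReal.ofReal (f i ω) ∂P ≠ ⊤ := by
    rw [lintegral_tsum hmeas]
    simp only [← ofReal_integral_eq_lintegral_ofReal (hf _) (hf0 _)]
    exact hsum.tsum_ofReal_ne_top
  filter_upwards [ae_lt_top' (AEMeasurable.tsum hmeas) hfin, ae_all_iff.2 hf0]
    with ω hω hω0
  have htoReal := (ENNReal.tendsto_toReal ENNReal.zero_ne_top).comp
    (ENNReal.tendsto_cofinite_zero_of_tsum_ne_top hω.ne)
  exact htoReal.congr fun i => ENNReal.toReal_ofReal (hω0 i)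

theorem strongMixingLE_succ_rpow_neg_min [IsProbabilityMeasure P] {𝓧 : Type*} [MeasurableSpace 𝓧]
    {X : ℕ → Ω → 𝓧} {C ϑ : ℝ}
    (hα : ∀ k n, 1 ≤ n → StrongMixingLE P (X k) (X (k + n)) (C * (n : ℝ) ^ (-ϑ))) (k d : ℕ) :
    StrongMixingLE P (X k) (X (k + d)) ((1 + 2 * C) * ((d : ℝ) + 1) ^ (-min ϑ 1)) := by
  have hC : 0 ≤ C := by simpa using (hα 0 1 le_rfl).nonneg
  rcases Nat.eq_zero_or_pos d with rfl | hd
  · exact (StrongMixingLE.one _ _).mono (by simpa using hC)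
  · refine (hα k d hd).mono ?_
    have hpow := mul_le_mul_of_nonneg_left (rpow_neg_le_two_mul_succ_rpow_neg_min hd ϑ) hC
    have hpos : (0 : ℝ) ≤ ((d : ℝ) + 1) ^ (-min ϑ 1) := by positivity
    linarith

variable [IsProbabilityMeasure P] {U : ℕ → Ω → ℝ}

theorem integral_dyadicEnergy_gridDev_le_of_rpow (hmeas : ∀ i, Measurable (U i))
    (hunif : ∀ i, Measure.map (U i) P = volume.restrict (Icc 0 1)) {c θ : ℝ} (hθ : θ ≤ 1)
    (hb : ∀ k d, StrongMixingLE P (U k) (U (k + d)) (c * ((d : ℝ) + 1) ^ (-θ))) (K : ℕ) :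
    ∫ ω, dyadicEnergy K (gridDev U K ω) ∂P ≤
      8 * c * (K + 1) ^ 3 * ((2 : ℝ) ^ K) ^ (2 - θ) := by
  have hc : 0 ≤ c := by simpa using (hb 0 0).nonneg
  have hlog : 1 + Real.log (2 ^ K) ≤ K + 1 := by
    rw [Real.log_pow, add_comm]
    gcongr
    exact mul_le_of_le_one_right K.cast_nonneg (Real.log_two_lt_d9.le.trans (by norm_num))
  calc ∫ ω, dyadicEnergy K (gridDev U K ω) ∂P
      ≤ 8 * (K + 1) ^ 2 * 2 ^ K * ∑ d ∈ Finset.range (2 ^ K), c * ((d : ℝ) + 1) ^ (-θ) :=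
        integral_dyadicEnergy_gridDev_le hmeas hunif hb K
    _ ≤ 8 * (K + 1) ^ 2 * 2 ^ K * (c * (((2 : ℝ) ^ K) ^ (1 - θ) * (K + 1))) := by
        rw [← Finset.mul_sum]
        gcongr
        refine (sum_range_rpow_neg_le hθ _).trans ?_
        push_cast
        gcongr
    _ = 8 * c * (K + 1) ^ 3 * ((2 : ℝ) ^ K) ^ (2 - θ) := by
        rw [show 2 - θ = 1 + (1 - θ) by ring, Real.rpow_add (by positivity), Real.rpow_one]
        ring

theorem ae_tendsto_dyadicEnergy_gridDev (hmeas : ∀ i, Measurable (U i))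
    (hunif : ∀ i, Measure.map (U i) P = volume.restrict (Icc 0 1)) {r c θ : ℝ} (hθ : θ ≤ 1)
    (hr : 2 * r < θ)
    (hb : ∀ k d, StrongMixingLE P (U k) (U (k + d)) (c * ((d : ℝ) + 1) ^ (-θ))) :
    ∀ᵐ ω ∂P, Tendsto (fun K : ℕ => (((K : ℝ) + 1) * ((2 : ℝ) ^ K) ^ (r - 1)) ^ 2 *
      dyadicEnergy K (gridDev U K ω)) atTop (𝓝 0) := by
  have hnonneg : ∀ (K : ℕ) ω, 0 ≤ (((K : ℝ) + 1) * ((2 : ℝ) ^ K) ^ (r - 1)) ^ 2 *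
      dyadicEnergy K (gridDev U K ω) :=
    fun K ω => mul_nonneg (sq_nonneg _) (dyadicEnergy_nonneg _ _)
  rw [← Nat.cofinite_eq_atTop]
  refine ae_tendsto_zero_of_summable_integral
    (fun K => (integrable_dyadicEnergy_gridDev hmeas hunif K).const_mul _)
    (fun K => .of_forall (hnonneg K)) ?_
  refine .of_nonneg_of_le (fun K => integral_nonneg (hnonneg K)) (fun K => ?_)
    ((summable_add_one_pow_mul_two_pow_rpow 5 (s := 2 * r - θ) (by linarith)).mul_left (8 * c))
  rw [integral_const_mul]
  calc (((K : ℝ) + 1) * ((2 : ℝ) ^ K) ^ (r - 1)) ^ 2 * ∫ ω, dyadicEnergy K (gridDev U K ω) ∂P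
      ≤ (((K : ℝ) + 1) * ((2 : ℝ) ^ K) ^ (r - 1)) ^ 2 *
          (8 * c * (K + 1) ^ 3 * ((2 : ℝ) ^ K) ^ (2 - θ)) := by
        gcongr
        exact integral_dyadicEnergy_gridDev_le_of_rpow hmeas hunif hθ hb K
    _ = 8 * c * (((K : ℝ) + 1) ^ 5 * ((2 : ℝ) ^ K) ^ (2 * r - θ)) := by
        rw [show 2 * r - θ = (r - 1) + (r - 1) + (2 - θ) by ring, Real.rpow_add (by positivity),
          Real.rpow_add (by positivity)]
        ring

end AlmostSureConvergence

theorem strongMixingLE_alphaCoef {Ω : Type*} [MeasurableSpace Ω] {P : Measure Ω}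
    [IsProbabilityMeasure P] (U : ℕ → Ω → ℝ) (k n : ℕ) :
    StrongMixingLE P (U k) (U (k + n)) (alphaCoef P U n) := by
  intro S hS T hT
  refine le_csSup ⟨1, ?_⟩ ⟨k, U k ⁻¹' S, U (k + n) ⁻¹' T, ?_, ?_, rfl⟩
  · rintro c ⟨-, A, B, -, -, rfl⟩
    exact abs_measureReal_inter_sub_mul_le_one A B
  · exact le_iSup₂_of_le (f := fun i (_ : i ∈ {i | i ≤ k}) => MeasurableSpace.comap (U i) _)
      k (mem_ofPred.2 le_rfl) le_rfl _ ⟨S, hS, rfl⟩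
  · exact le_iSup₂_of_le (f := fun i (_ : i ∈ {i | k + n ≤ i}) => MeasurableSpace.comap (U i) _)
      (k + n) (mem_ofPred.2 le_rfl) le_rfl _ ⟨T, hT, rfl⟩

theorem mz_slln_uniform_empirical_alpha_mixing_general
    {Ω : Type*} [MeasurableSpace Ω] (P : Measure Ω) [IsProbabilityMeasure P]
    (U : ℕ → Ω → ℝ) (hmeas : ∀ i, Measurable (U i))
    (hunif : ∀ i, Measure.map (U i) P = volume.restrict (Set.Icc (0 : ℝ) 1))
    (r C ϑ : ℝ) (hr : r < 1 / 2) (hϑ : 2 * r < ϑ)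
    (hα : ∀ k n : ℕ, 1 ≤ n → StrongMixingLE P (U k) (U (k + n)) (C * (n : ℝ) ^ (-ϑ))) :
    ∀ᵐ ω ∂P, Tendsto
      (fun n : ℕ => (n : ℝ) ^ r * ⨆ t : Set.Icc (0 : ℝ) 1, |empDF U n ω t - t|)
      atTop (𝓝 0) := by
  filter_upwards [ae_all_iff.2 fun i => ae_pos_of_map_eq (hmeas i) (hunif i),
    ae_tendsto_dyadicEnergy_gridDev hmeas hunif (min_le_right ϑ 1)
      (lt_min hϑ (by linarith)) (strongMixingLE_succ_rpow_neg_min hα)] with ω hpos henergy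
  exact tendsto_rpow_mul_of_le_dyadic (by linarith)
    (fun n => Real.iSup_nonneg fun t => abs_nonneg _)
    (fun K n hn => mul_iSup_abs_empDF_sub_le hpos hn)
    (tendsto_mul_sqrt_add_one_mul_rpow (by linarith) henergy)

/-- **Marcinkiewicz–Zygmund SLLN for the uniform empirical process of α-mixing data**
(Theorem 5 of the paper). -/
theorem mz_slln_uniform_empirical_alpha_mixing
    {Ω : Type*} [MeasurableSpace Ω] (P : Measure Ω) [IsProbabilityMeasure P]
    (U : ℕ → Ω → ℝ) (hmeas : ∀ i, Measurable (U i))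
    (hunif : ∀ i, Measure.map (U i) P = volume.restrict (Set.Icc (0 : ℝ) 1))
    (hmix : Tendsto (alphaCoef P U) atTop (nhds 0))
    (r C ϑ : ℝ) (hr0 : 0 ≤ r) (hr : r < 1 / 2) (hC : 0 < C) (hϑ : 2 * r < ϑ)
    (hα : ∀ n : ℕ, 1 ≤ n → alphaCoef P U n ≤ C * (n : ℝ) ^ (-ϑ)) :
    ∀ᵐ ω ∂P, Tendsto
      (fun n : ℕ => (n : ℝ) ^ r * ⨆ t : Set.Icc (0 : ℝ) 1, |empDF U n ω t - t|)
      atTop (nhds 0) :=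
  mz_slln_uniform_empirical_alpha_mixing_general P U hmeas hunif r C ϑ hr hϑ
    fun k n hn => (strongMixingLE_alphaCoef U k n).mono (hα n hn)
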